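/- The generalized Lévy operator L acts as a Fourier multiplier: for every f in the Schwartz space of ℝ^d and every ξ ∈ ℝ^d, the Fourier transform satisfies (Lf)^(ξ) = a(ξ) · f̂(ξ), where a is the symbol a(ξ) = (−1)^{l+1} ∫_{ℝ^d} ( cos⟨y,ξ⟩ − Σ_{j=0}^{l} (−1)^j ⟨y,ξ⟩^{2j}/(2j)! ) h(y)|y|^{−(2l+1+α)} dy (with the convention f̂(ξ) = ∫ f(x) e^{−i⟨x,ξ⟩} dx; for other Fourier normalizations the same identity holds with a evaluated at the correspondingly rescaled frequency). -/

import Mathlib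

open scoped BigOperators
open MeasureTheory

noncomputable section

/-- The compensated integrand `f(x+y) − f(x) − Σ_{i=1}^{2l} (1/i!) Dⁱf(x)[y,…,y]`. -/
def levyIntegrand {d : ℕ} (l : ℕ) (f : EuclideanSpace ℝ (Fin d) → ℝ)
    (x y : EuclideanSpace ℝ (Fin d)) : ℝ :=
  f (x + y) - f x - ∑ i ∈ Finset.Icc 1 (2 * l),
    (1 / (i.factorial : ℝ)) * iteratedFDeriv ℝ i f x (fun _ => y)

/-- The density `h(y)|y|^{−(2l+1+α)}` of the Lévy measure. -/
def levyWeight {d : ℕ} (l : ℕ) (α : ℝ) (h : EuclideanSpace ℝ (Fin d) → ℝ)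
    (y : EuclideanSpace ℝ (Fin d)) : ℝ :=
  h y * ‖y‖ ^ (-(2 * (l : ℝ) + 1 + α))

/-- The generalized Lévy operator
`Lf(x) = (−1)^{l+1} ∫ (f(x+y) − f(x) − Σ_{i=1}^{2l} (1/i!) Dⁱf(x)[y,…,y]) h(y)|y|^{−(2l+1+α)} dy`. -/
def levyOp {d : ℕ} (l : ℕ) (α : ℝ) (h : EuclideanSpace ℝ (Fin d) → ℝ)
    (f : EuclideanSpace ℝ (Fin d) → ℝ) (x : EuclideanSpace ℝ (Fin d)) : ℝ :=
  (-1 : ℝ) ^ (l + 1) * ∫ y, levyIntegrand l f x y * levyWeight l α h y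

/-- The Fourier transform with the convention `f̂(ξ) = ∫ f(x) e^{−i⟨x,ξ⟩} dx`. -/
def ft {d : ℕ} (f : EuclideanSpace ℝ (Fin d) → ℝ) (ξ : EuclideanSpace ℝ (Fin d)) : ℂ :=
  ∫ x, (f x : ℂ) * Complex.exp (-Complex.I * ((inner ℝ x ξ : ℝ) : ℂ))

/-- The symbol
`a(ξ) = (−1)^{l+1} ∫ (cos⟨y,ξ⟩ − Σ_{j=0}^{l} (−1)^j ⟨y,ξ⟩^{2j}/(2j)!) h(y)|y|^{−(2l+1+α)} dy`. -/
def levySymbol {d : ℕ} (l : ℕ) (α : ℝ) (h : EuclideanSpace ℝ (Fin d) → ℝ)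
    (ξ : EuclideanSpace ℝ (Fin d)) : ℝ :=
  (-1 : ℝ) ^ (l + 1) * ∫ y,
    (Real.cos (inner ℝ y ξ) - ∑ j ∈ Finset.range (l + 1),
      (-1 : ℝ) ^ j * (inner ℝ y ξ : ℝ) ^ (2 * j) / (2 * j).factorial) * levyWeight l α h y

/-!
The compensated integrand is the Taylor remainder of `f` of degree `2l`. Its integral form, Tonelli
and translation invariance bound its `L¹` norm in `x` by `|y|^{2l+1} ‖D^{2l+1} f‖₁`, and the Lévy
measure has a finite moment of order `2l + 1`, so the Fourier integral may be moved inside the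
integral over `y`. There it turns the Taylor remainder of `f` into that of the exponential at
`i⟨y,ξ⟩`, times `f̂(ξ)`. Since the Lévy measure is symmetric, only the even part in `y` contributes,
and the even part of the exponential remainder is the compensated cosine.
-/

section TaylorRemainder

open scoped ENNReal Nat

variable {E F : Type*} [NormedAddCommGroup E] [NormedSpace ℝ E]
  [NormedAddCommGroup F] [NormedSpace ℝ F]

/-- The remainder at `x + y` of the Taylor polynomial of `f` of degree `n` centred at `x`, as a
function of the centre `x` and the increment `y`. For `n = 2l` it is `levyIntegrand l f`. -/
def taylorRemainder (n : ℕ) (f : E → F) (x y : E) : F :=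
  f (x + y) - ∑ i ∈ Finset.range (n + 1), (i ! : ℝ)⁻¹ • iteratedFDeriv ℝ i f x fun _ => y

lemma continuous_uncurry_taylorRemainder {n : ℕ} {f : E → F} (hf : ContDiff ℝ n f) :
    Continuous (Function.uncurry (taylorRemainder n f)) := by
  have hf₀ := hf.continuous
  refine Continuous.sub (by fun_prop) (continuous_finsetSum _ fun i hi => ?_)
  have hfi : Continuous (iteratedFDeriv ℝ i f) :=
    hf.continuous_iteratedFDeriv (mod_cast Nat.lt_succ_iff.1 (Finset.mem_range.1 hi))
  exact (Continuous.eval (by fun_prop) (by fun_prop)).const_smul _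

lemma enorm_taylorRemainder_le [CompleteSpace F] {n : ℕ} {f : E → F} (hf : ContDiff ℝ (n + 1) f)
    (x y : E) :
    ‖taylorRemainder n f x y‖ₑ ≤
      ∫⁻ t in Set.Ioc (0 : ℝ) 1, ‖iteratedFDeriv ℝ (n + 1) f (x + t • y)‖ₑ * ‖y‖ₑ ^ (n + 1) := by
  have taylor : taylorRemainder n f x y = (n ! : ℝ)⁻¹ • ∫ t in (0 : ℝ)..1,
      (1 - t) ^ n • iteratedFDeriv ℝ (n + 1) f (x + t • y) fun _ => y := by
    rw [taylorRemainder, map_add_eq_sum_add_integral_iteratedFDeriv fun _ _ => hf.contDiffAt,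
      add_sub_cancel_left]
  have enorm_le_one {r : ℝ} (h₀ : 0 ≤ r) (h₁ : r ≤ 1) : ‖r‖ₑ ≤ 1 := by
    simpa [Real.enorm_eq_ofReal h₀] using h₁
  have factorial_le : ‖(n ! : ℝ)⁻¹‖ₑ ≤ 1 :=
    enorm_le_one (by positivity) (inv_le_one_of_one_le₀ (mod_cast n.factorial_pos))
  rw [taylor, enorm_smul, intervalIntegral.integral_of_le zero_le_one]
  refine (mul_le_of_le_one_left' factorial_le).trans <|
    (enorm_integral_le_lintegral_enorm _).trans <|
    setLIntegral_mono' measurableSet_Ioc fun t ht => ?_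
  have weight_le : ‖(1 - t) ^ n‖ₑ ≤ 1 :=
    enorm_le_one (pow_nonneg (by linarith [ht.2]) n)
      (pow_le_one₀ (by linarith [ht.2]) (by linarith [ht.1]))
  rw [enorm_smul]
  refine (mul_le_of_le_one_left' weight_le).trans ?_
  simp only [← ofReal_norm, ← ENNReal.ofReal_pow (norm_nonneg y),
    ← ENNReal.ofReal_mul (norm_nonneg _)]
  gcongr
  simpa using (iteratedFDeriv ℝ (n + 1) f (x + t • y)).le_opNorm fun _ => y

variable [MeasurableSpace E] [BorelSpace E] {μ : Measure E} [SFinite μ]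

lemma lintegral_enorm_taylorRemainder_le [CompleteSpace F] [μ.IsAddRightInvariant] {n : ℕ}
    {f : E → F} (hf : ContDiff ℝ (n + 1) f) (y : E) :
    ∫⁻ x, ‖taylorRemainder n f x y‖ₑ ∂μ ≤
      (∫⁻ x, ‖iteratedFDeriv ℝ (n + 1) f x‖ₑ ∂μ) * ‖y‖ₑ ^ (n + 1) := by
  have hcont : Continuous (iteratedFDeriv ℝ (n + 1) f) := hf.continuous_iteratedFDeriv le_rfl
  calc ∫⁻ x, ‖taylorRemainder n f x y‖ₑ ∂μ
      ≤ ∫⁻ x, (∫⁻ t in Set.Ioc (0 : ℝ) 1,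
          ‖iteratedFDeriv ℝ (n + 1) f (x + t • y)‖ₑ * ‖y‖ₑ ^ (n + 1)) ∂μ :=
        lintegral_mono fun x => enorm_taylorRemainder_le hf x y
    _ = ∫⁻ t in Set.Ioc (0 : ℝ) 1, ∫⁻ x,
          ‖iteratedFDeriv ℝ (n + 1) f (x + t • y)‖ₑ * ‖y‖ₑ ^ (n + 1) ∂μ :=
        lintegral_lintegral_swap <| AEMeasurable.mul_const (Continuous.measurable <|
          hcont.enorm.comp (by fun_prop : Continuous fun p : E × ℝ => p.1 + p.2 • y)).aemeasurable _
    _ = ∫⁻ _ in Set.Ioc (0 : ℝ) 1,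
          (∫⁻ x, ‖iteratedFDeriv ℝ (n + 1) f x‖ₑ ∂μ) * ‖y‖ₑ ^ (n + 1) := by
        congr with t
        rw [lintegral_mul_const' _ _ (by finiteness),
          lintegral_add_right_eq_self fun x => ‖iteratedFDeriv ℝ (n + 1) f x‖ₑ]
    _ = (∫⁻ x, ‖iteratedFDeriv ℝ (n + 1) f x‖ₑ ∂μ) * ‖y‖ₑ ^ (n + 1) := by simp

lemma integrable_prod_smul_taylorRemainder [SecondCountableTopology E] [CompleteSpace F]
    [μ.IsAddRightInvariant] {ν : Measure E} [SFinite ν] {n : ℕ} {f : E → F}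
    (hf : ContDiff ℝ (n + 1) f) (hfint : Integrable (iteratedFDeriv ℝ (n + 1) f) μ)
    {w : E → ℝ} (hw : AEStronglyMeasurable w ν)
    (hwint : Integrable (fun y => ‖y‖ ^ (n + 1) * w y) ν) :
    Integrable (fun p : E × E => w p.2 • taylorRemainder n f p.1 p.2) (μ.prod ν) := by
  have hmeas : AEStronglyMeasurable (fun p : E × E => w p.2 • taylorRemainder n f p.1 p.2)
      (μ.prod ν) :=
    hw.comp_snd.smul (continuous_uncurry_taylorRemainder
      (hf.of_le (mod_cast n.le_succ))).aestronglyMeasurable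
  refine ⟨hmeas, ?_⟩
  rw [hasFiniteIntegral_def, lintegral_prod_symm _ hmeas.enorm]
  calc ∫⁻ y, ∫⁻ x, ‖w y • taylorRemainder n f x y‖ₑ ∂μ ∂ν
      = ∫⁻ y, ‖w y‖ₑ * ∫⁻ x, ‖taylorRemainder n f x y‖ₑ ∂μ ∂ν := by
        simp only [enorm_smul, lintegral_const_mul' _ _ enorm_ne_top]
    _ ≤ ∫⁻ y, ‖w y‖ₑ * ((∫⁻ x, ‖iteratedFDeriv ℝ (n + 1) f x‖ₑ ∂μ) * ‖y‖ₑ ^ (n + 1)) ∂ν := by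
        gcongr with y
        exact lintegral_enorm_taylorRemainder_le hf y
    _ = ∫⁻ y, (∫⁻ x, ‖iteratedFDeriv ℝ (n + 1) f x‖ₑ ∂μ) * ‖‖y‖ ^ (n + 1) * w y‖ₑ ∂ν := by
        congr with y
        rw [enorm_mul, enorm_pow, enorm_norm]
        ring
    _ = (∫⁻ x, ‖iteratedFDeriv ℝ (n + 1) f x‖ₑ ∂μ) * ∫⁻ y, ‖‖y‖ ^ (n + 1) * w y‖ₑ ∂ν :=
        lintegral_const_mul' _ _ hfint.2.ne
    _ < ∞ := ENNReal.mul_lt_top hfint.2 hwint.2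

end TaylorRemainder

section EvenPart

open scoped Nat

lemma sum_range_mul_pow_add_neg_pow {A : Type*} [CommRing A] (c : ℕ → A) (z : A) (l : ℕ) :
    ∑ i ∈ Finset.range (2 * l + 1), c i * (z ^ i + (-z) ^ i) =
      2 * ∑ j ∈ Finset.range (l + 1), c (2 * j) * z ^ (2 * j) := by
  induction l with
  | zero => simp only [mul_zero, zero_add, Finset.range_one, Finset.sum_singleton]; ring
  | succ l ih =>
    rw [Finset.sum_range_succ _ (l + 1), mul_add 2 (∑ j ∈ Finset.range (l + 1), _), ← ih,
      mul_add_one 2 l, Finset.sum_range_succ, Finset.sum_range_succ, Odd.neg_pow ⟨l, rfl⟩,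
      Even.neg_pow ⟨l + 1, by ring⟩]
    ring

/-- The remainder of the Taylor polynomial of `exp` of degree `n` at `0`; at `i⟨y,ξ⟩` it is the
Fourier multiplier of `f ↦ (taylorRemainder n f · y)`. -/
def expRemainder (n : ℕ) (z : ℂ) : ℂ :=
  Complex.exp z - ∑ i ∈ Finset.range (n + 1), (i ! : ℂ)⁻¹ * z ^ i

/-- The compensated cosine `cos t − Σ_{j=0}^{l} (−1)^j t^{2j}/(2j)!`, written as in the integrand of
`levySymbol`. -/
def cosRemainder (l : ℕ) (t : ℝ) : ℝ :=
  Real.cos t - ∑ j ∈ Finset.range (l + 1), (-1 : ℝ) ^ j * t ^ (2 * j) / (2 * j).factorial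

lemma expRemainder_I_mul_add_neg (l : ℕ) (t : ℝ) :
    expRemainder (2 * l) (Complex.I * t) + expRemainder (2 * l) (-(Complex.I * t)) =
      2 * (cosRemainder l t : ℂ) := by
  have exp_add : Complex.exp (Complex.I * t) + Complex.exp (-(Complex.I * t)) =
      2 * Complex.cos t := by
    rw [Complex.two_cos, mul_comm, neg_mul]
  have even_sum := sum_range_mul_pow_add_neg_pow (fun i => (i ! : ℂ)⁻¹) (Complex.I * t) l
  have even_term (j : ℕ) : ((2 * j)! : ℂ)⁻¹ * (Complex.I * t) ^ (2 * j) =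
      (-1) ^ j * t ^ (2 * j) / (2 * j)! := by
    rw [mul_pow, pow_mul Complex.I, Complex.I_sq]
    ring
  simp only [mul_add, Finset.sum_add_distrib, even_term] at even_sum
  simp only [expRemainder, cosRemainder]
  push_cast
  linear_combination exp_add - even_sum

end EvenPart

section FourierTransform

open scoped FourierTransform Nat

variable {d : ℕ}

lemma norm_exp_neg_I_mul_ofReal (t : ℝ) : ‖Complex.exp (-Complex.I * t)‖ = 1 := by
  simp [Complex.norm_exp]

lemma ft_eq_fourier (f : EuclideanSpace ℝ (Fin d) → ℝ) (ξ : EuclideanSpace ℝ (Fin d)) :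
    ft f ξ = 𝓕 (fun x => (f x : ℂ)) ((2 * Real.pi)⁻¹ • ξ) := by
  rw [ft, Real.fourier_eq']
  congr with x
  rw [inner_smul_right, smul_eq_mul, mul_comm]
  congr 2
  push_cast
  field_simp

lemma ft_comp_add_right (f : EuclideanSpace ℝ (Fin d) → ℝ) (y ξ : EuclideanSpace ℝ (Fin d)) :
    ft (fun x => f (x + y)) ξ = Complex.exp (Complex.I * inner ℝ y ξ) * ft f ξ := by
  have shift (x : EuclideanSpace ℝ (Fin d)) :
      (f (x + y) : ℂ) * Complex.exp (-Complex.I * inner ℝ x ξ) =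
      Complex.exp (Complex.I * inner ℝ y ξ) *
        ((f (x + y) : ℂ) * Complex.exp (-Complex.I * inner ℝ (x + y) ξ)) := by
    rw [mul_left_comm, ← Complex.exp_add, inner_add_left]
    congr 2
    push_cast
    ring
  simp only [ft, shift]
  rw [integral_const_mul,
    integral_add_right_eq_self fun x => (f x : ℂ) * Complex.exp (-Complex.I * inner ℝ x ξ)]

lemma ft_iteratedFDeriv {n : ℕ} {f : EuclideanSpace ℝ (Fin d) → ℝ} (hf : ContDiff ℝ n f)
    (hfint : ∀ k ≤ n, Integrable (iteratedFDeriv ℝ k f)) (y ξ : EuclideanSpace ℝ (Fin d)) :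
    ft (fun x => iteratedFDeriv ℝ n f x fun _ => y) ξ =
      (Complex.I * inner ℝ y ξ) ^ n * ft f ξ := by
  have hcontDiff : ContDiff ℝ n fun x => (f x : ℂ) := Complex.ofRealCLM.contDiff.comp hf
  have comp_ofReal (k : ℕ) (hk : k ≤ n) : iteratedFDeriv ℝ k (fun x => (f x : ℂ)) =
      fun x => Complex.ofRealCLM.compContinuousMultilinearMap (iteratedFDeriv ℝ k f x) :=
    funext fun _ => Complex.ofRealCLM.iteratedFDeriv_comp_left hf.contDiffAt (mod_cast hk)
  have hint (k : ℕ) (hk : k ≤ (n : ℕ∞)) :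
      Integrable (iteratedFDeriv ℝ k fun x => (f x : ℂ)) := by
    rw [comp_ofReal k (mod_cast hk)]
    exact (ContinuousLinearMap.compContinuousMultilinearMapL ℝ _ ℝ ℂ
      Complex.ofRealCLM).integrable_comp (hfint k (mod_cast hk))
  have apply_ofReal (x : EuclideanSpace ℝ (Fin d)) : ((iteratedFDeriv ℝ n f x fun _ => y : ℝ) : ℂ) =
      iteratedFDeriv ℝ n (fun x => (f x : ℂ)) x fun _ => y := by
    rw [comp_ofReal n le_rfl]
    rfl
  simp only [ft_eq_fourier, apply_ofReal]
  rw [← Real.fourier_continuousMultilinearMap_apply (hint n le_rfl),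
    Real.fourier_iteratedFDeriv hcontDiff hint le_rfl,
    VectorFourier.fourierPowSMulRight_apply]
  have multiplier : -(2 * Real.pi * Complex.I) * ((-innerSL ℝ) ((2 * Real.pi)⁻¹ • ξ) y : ℝ) =
      Complex.I * inner ℝ y ξ := by
    rw [neg_apply, neg_apply, innerSL_apply_apply, real_inner_smul_left, real_inner_comm]
    push_cast
    field_simp
  rw [Finset.prod_const, Finset.card_fin, Complex.real_smul, smul_eq_mul, ← mul_assoc,
    Complex.ofReal_pow, ← mul_pow, multiplier]

lemma integrable_ofReal_mul_exp {f : EuclideanSpace ℝ (Fin d) → ℝ} (hf : Integrable f)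
    (ξ : EuclideanSpace ℝ (Fin d)) :
    Integrable fun x => (f x : ℂ) * Complex.exp (-Complex.I * inner ℝ x ξ) :=
  hf.ofReal.mul_bdd (Continuous.aestronglyMeasurable (by fun_prop))
    (.of_forall fun _ => (norm_exp_neg_I_mul_ofReal _).le)

lemma ft_const_mul (c : ℝ) (f : EuclideanSpace ℝ (Fin d) → ℝ) (ξ : EuclideanSpace ℝ (Fin d)) :
    ft (fun x => c * f x) ξ = c * ft f ξ := by
  simp only [ft, Complex.ofReal_mul, mul_assoc, integral_const_mul]

lemma ft_sub {f g : EuclideanSpace ℝ (Fin d) → ℝ} (hf : Integrable f) (hg : Integrable g)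
    (ξ : EuclideanSpace ℝ (Fin d)) : ft (fun x => f x - g x) ξ = ft f ξ - ft g ξ := by
  simp only [ft, Complex.ofReal_sub, sub_mul]
  exact integral_sub (integrable_ofReal_mul_exp hf ξ) (integrable_ofReal_mul_exp hg ξ)

lemma ft_finsetSum {ι : Type*} (s : Finset ι) {f : ι → EuclideanSpace ℝ (Fin d) → ℝ}
    (hf : ∀ i ∈ s, Integrable (f i)) (ξ : EuclideanSpace ℝ (Fin d)) :
    ft (fun x => ∑ i ∈ s, f i x) ξ = ∑ i ∈ s, ft (f i) ξ := by
  simp only [ft, Complex.ofReal_sum, Finset.sum_mul]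
  exact integral_finsetSum s fun i hi => integrable_ofReal_mul_exp (hf i hi) ξ

lemma ft_taylorRemainder {n : ℕ} {f : EuclideanSpace ℝ (Fin d) → ℝ} (hf : ContDiff ℝ n f)
    (hfint : ∀ k ≤ n, Integrable (iteratedFDeriv ℝ k f)) (y ξ : EuclideanSpace ℝ (Fin d)) :
    ft (fun x => taylorRemainder n f x y) ξ =
      expRemainder n (Complex.I * inner ℝ y ξ) * ft f ξ := by
  have hderiv (i : ℕ) (hi : i ≤ n) (v : Fin i → EuclideanSpace ℝ (Fin d)) :
      Integrable fun x => iteratedFDeriv ℝ i f x v :=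
    (ContinuousMultilinearMap.apply ℝ _ ℝ v).integrable_comp (hfint i hi)
  have hf₀ : Integrable f := by simpa using hderiv 0 n.zero_le 0
  have hterm (i : ℕ) (hi : i ∈ Finset.range (n + 1)) :
      Integrable fun x => (i ! : ℝ)⁻¹ * iteratedFDeriv ℝ i f x fun _ => y :=
    (hderiv i (Nat.lt_succ_iff.1 (Finset.mem_range.1 hi)) _).const_mul _
  simp only [taylorRemainder, smul_eq_mul]
  rw [ft_sub (hf₀.comp_add_right y) (integrable_finsetSum _ hterm), ft_comp_add_right,
    ft_finsetSum _ hterm, expRemainder, sub_mul, Finset.sum_mul]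
  congr 1
  refine Finset.sum_congr rfl fun i hi => ?_
  have hin : i ≤ n := Nat.lt_succ_iff.1 (Finset.mem_range.1 hi)
  rw [ft_const_mul, ft_iteratedFDeriv (hf.of_le (mod_cast hin)) fun k hk => hfint k (hk.trans hin)]
  push_cast
  ring

section Fubini

variable {Y : Type*} [MeasurableSpace Y] {ν : Measure Y} {K : EuclideanSpace ℝ (Fin d) → Y → ℝ}

lemma integrable_uncurry_mul_exp (hK : Integrable (Function.uncurry K) (volume.prod ν))
    (ξ : EuclideanSpace ℝ (Fin d)) :
    Integrable (Function.uncurry fun x y => (K x y : ℂ) * Complex.exp (-Complex.I * inner ℝ x ξ))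
      (volume.prod ν) := by
  have hexp : AEStronglyMeasurable fun x : EuclideanSpace ℝ (Fin d) =>
      Complex.exp (-Complex.I * inner ℝ x ξ) :=
    Continuous.aestronglyMeasurable (by fun_prop)
  exact hK.ofReal.mul_bdd hexp.comp_fst (.of_forall fun _ => (norm_exp_neg_I_mul_ofReal _).le)

lemma integrable_ft [SFinite ν] (hK : Integrable (Function.uncurry K) (volume.prod ν))
    (ξ : EuclideanSpace ℝ (Fin d)) : Integrable (fun y => ft (fun x => K x y) ξ) ν :=
  (integrable_uncurry_mul_exp hK ξ).integral_prod_right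

lemma ft_integral [SFinite ν] (hK : Integrable (Function.uncurry K) (volume.prod ν))
    (ξ : EuclideanSpace ℝ (Fin d)) :
    ft (fun x => ∫ y, K x y ∂ν) ξ = ∫ y, ft (fun x => K x y) ξ ∂ν := by
  simp only [ft, ← integral_complex_ofReal, ← integral_mul_const]
  exact integral_integral_swap (integrable_uncurry_mul_exp hK ξ)

end Fubini

lemma integral_add_comp_neg {E F : Type*} [AddGroup E] [MeasurableSpace E] [MeasurableNeg E]
    [NormedAddCommGroup F] [NormedSpace ℝ F] {ν : Measure E} [ν.IsNegInvariant] {g : E → F}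
    (hg : Integrable g ν) : ∫ y, (g y + g (-y)) ∂ν = 2 • ∫ y, g y ∂ν := by
  rw [integral_add hg hg.comp_neg, integral_neg_eq_self g ν, two_nsmul]

theorem ft_integral_mul_taylorRemainder {ν : Measure (EuclideanSpace ℝ (Fin d))} [SFinite ν]
    [ν.IsNegInvariant] {l : ℕ} {f : EuclideanSpace ℝ (Fin d) → ℝ} (hf : ContDiff ℝ (2 * l + 1) f)
    (hfint : ∀ k ≤ 2 * l + 1, Integrable (iteratedFDeriv ℝ k f))
    {w : EuclideanSpace ℝ (Fin d) → ℝ} (hw : AEStronglyMeasurable w ν) (hwneg : ∀ y, w (-y) = w y)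
    (hwint : Integrable (fun y => ‖y‖ ^ (2 * l + 1) * w y) ν) (ξ : EuclideanSpace ℝ (Fin d)) :
    ft (fun x => ∫ y, w y * taylorRemainder (2 * l) f x y ∂ν) ξ =
      (∫ y, cosRemainder l (inner ℝ y ξ) * w y ∂ν : ℝ) * ft f ξ := by
  have hK : Integrable (Function.uncurry fun x y => w y * taylorRemainder (2 * l) f x y)
      (volume.prod ν) :=
    integrable_prod_smul_taylorRemainder (mod_cast hf) (hfint _ le_rfl) hw hwint
  have ft_K (y : EuclideanSpace ℝ (Fin d)) : ft (fun x => w y * taylorRemainder (2 * l) f x y) ξ =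
      w y * expRemainder (2 * l) (Complex.I * inner ℝ y ξ) * ft f ξ := by
    rw [ft_const_mul, ft_taylorRemainder (hf.of_le (mod_cast (2 * l).le_succ))
      fun k hk => hfint k (hk.trans (2 * l).le_succ), mul_assoc]
  rw [ft_integral hK, ← integral_complex_ofReal, ← integral_mul_const]
  rw [← nsmul_right_inj two_ne_zero, ← integral_add_comp_neg (integrable_ft hK ξ), nsmul_eq_mul,
    ← integral_const_mul]
  congr with y
  rw [ft_K, ft_K, hwneg, inner_neg_left, Complex.ofReal_neg, mul_neg]
  push_cast
  linear_combination w y * ft f ξ * expRemainder_I_mul_add_neg l (inner ℝ y ξ)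

end FourierTransform

section LevyOperator

variable {d l : ℕ} {α : ℝ} {h : EuclideanSpace ℝ (Fin d) → ℝ}

lemma levyIntegrand_eq_taylorRemainder (l : ℕ) (f : EuclideanSpace ℝ (Fin d) → ℝ) :
    levyIntegrand l f = taylorRemainder (2 * l) f := by
  ext x y
  simp only [levyIntegrand, taylorRemainder, Finset.range_eq_Ico, smul_eq_mul, one_div]
  rw [Finset.sum_eq_sum_Ico_succ_bot (Nat.succ_pos _), ← sub_sub]
  simp [Finset.Ico_add_one_right_eq_Icc]

lemma levyOp_eq_integral_taylorRemainder (l : ℕ) (α : ℝ) (h f : EuclideanSpace ℝ (Fin d) → ℝ) :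
    levyOp l α h f = fun x =>
      (-1) ^ (l + 1) * ∫ y, levyWeight l α h y * taylorRemainder (2 * l) f x y := by
  ext x
  simp only [levyOp, levyIntegrand_eq_taylorRemainder, mul_comm (levyWeight l α h _)]

lemma levySymbol_eq_integral_cosRemainder (l : ℕ) (α : ℝ) (h : EuclideanSpace ℝ (Fin d) → ℝ)
    (ξ : EuclideanSpace ℝ (Fin d)) :
    levySymbol l α h ξ =
      (-1) ^ (l + 1) * ∫ y, cosRemainder l (inner ℝ y ξ) * levyWeight l α h y := rfl

lemma levyWeight_neg (hsymm : ∀ y, h (-y) = h y) (y : EuclideanSpace ℝ (Fin d)) :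
    levyWeight l α h (-y) = levyWeight l α h y := by
  rw [levyWeight, levyWeight, hsymm, norm_neg]

lemma aestronglyMeasurable_levyWeight (hh : AEStronglyMeasurable h) :
    AEStronglyMeasurable (levyWeight l α h) :=
  hh.mul (Measurable.aestronglyMeasurable (by fun_prop))

lemma norm_pow_mul_levyWeight (hα : α < 0) (y : EuclideanSpace ℝ (Fin d)) :
    ‖y‖ ^ (2 * l + 1) * levyWeight l α h y = h y * ‖y‖ ^ (-α) := by
  rcases eq_or_ne y 0 with rfl | hy
  · simp [Real.zero_rpow (neg_pos.2 hα).ne']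
  · rw [levyWeight, mul_left_comm, ← Real.rpow_natCast, ← Real.rpow_add (norm_pos_iff.2 hy)]
    congr 2
    push_cast
    ring

lemma integrable_norm_pow_mul_levyWeight (hα : α < 0) (hh : AEStronglyMeasurable h) {M : ℝ}
    (hbd : ∀ y, ‖h y‖ ≤ M) {R : ℝ} (hvan : ∀ y, R < ‖y‖ → h y = 0) :
    Integrable fun y => ‖y‖ ^ (2 * l + 1) * levyWeight l α h y := by
  simp only [norm_pow_mul_levyWeight hα]
  have hsupp : Function.support (fun y => h y * ‖y‖ ^ (-α)) ⊆ Metric.closedBall 0 R := by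
    intro y hy
    by_contra hyR
    exact hy (by simp [hvan y (by simpa using hyR)])
  have hcont : Continuous fun y : EuclideanSpace ℝ (Fin d) => ‖y‖ ^ (-α) :=
    continuous_norm.rpow_const fun _ => .inr (neg_pos.2 hα).le
  rw [← integrableOn_iff_integrable_of_support_subset hsupp]
  exact (hcont.continuousOn.integrableOn_compact (isCompact_closedBall 0 R)).bdd_mul
    hh.restrict (.of_forall hbd)

end LevyOperator

lemma integrable_iteratedFDeriv_schwartzMap {E F : Type*} [NormedAddCommGroup E] [NormedSpace ℝ E]
    [MeasurableSpace E] [BorelSpace E] [SecondCountableTopology E]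
    [NormedAddCommGroup F] [NormedSpace ℝ F] (μ : Measure E) [μ.HasTemperateGrowth]
    (f : SchwartzMap E F) (n : ℕ) : Integrable (iteratedFDeriv ℝ n f) μ := by
  have hcont : Continuous (iteratedFDeriv ℝ n f) :=
    (f.smooth n).continuous_iteratedFDeriv le_rfl
  rw [← integrable_norm_iff hcont.aestronglyMeasurable]
  simpa using f.integrable_pow_mul_iteratedFDeriv μ 0 n

theorem levyOp_fourier_multiplier_general {d l : ℕ} {α : ℝ} {h : EuclideanSpace ℝ (Fin d) → ℝ}
    (hh : AEStronglyMeasurable h) (hsymm : ∀ y, h (-y) = h y)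
    (hmoment : Integrable fun y => ‖y‖ ^ (2 * l + 1) * levyWeight l α h y)
    {f : EuclideanSpace ℝ (Fin d) → ℝ} (hf : ContDiff ℝ (2 * l + 1) f)
    (hfint : ∀ k ≤ 2 * l + 1, Integrable (iteratedFDeriv ℝ k f)) (ξ : EuclideanSpace ℝ (Fin d)) :
    ft (levyOp l α h f) ξ = (levySymbol l α h ξ : ℂ) * ft f ξ := by
  rw [levyOp_eq_integral_taylorRemainder, levySymbol_eq_integral_cosRemainder, ft_const_mul,
    ft_integral_mul_taylorRemainder hf hfint (aestronglyMeasurable_levyWeight hh)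
      (levyWeight_neg hsymm) hmoment, Complex.ofReal_mul, mul_assoc]

/-- the generalized Lévy operator acts as a Fourier multiplier on the
Schwartz space: `(Lf)^(ξ) = a(ξ) · f̂(ξ)`. -/
theorem levyOp_fourier_multiplier
    (d l : ℕ) (α : ℝ) (hα : α ∈ Set.Ioo (-1 : ℝ) 0)
    (h : EuclideanSpace ℝ (Fin d) → ℝ)
    (hmeas : Measurable h) (hpos : ∀ y, 0 ≤ h y)
    (M : ℝ) (hbd : ∀ y, h y ≤ M)
    (hsymm : ∀ y, h (-y) = h y)
    (R : ℝ) (hR : 0 < R) (hvan : ∀ y : EuclideanSpace ℝ (Fin d), R < ‖y‖ → h y = 0)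
    (f : SchwartzMap (EuclideanSpace ℝ (Fin d)) ℝ) (ξ : EuclideanSpace ℝ (Fin d)) :
    ft (levyOp l α h ⇑f) ξ = (levySymbol l α h ξ : ℂ) * ft (⇑f) ξ :=
  levyOp_fourier_multiplier_general hmeas.aestronglyMeasurable hsymm
    (integrable_norm_pow_mul_levyWeight hα.2 hmeas.aestronglyMeasurable
      (fun y => (Real.norm_of_nonneg (hpos y)).trans_le (hbd y)) hvan)
    (f.smooth _) (fun k _ => integrable_iteratedFDeriv_schwartzMap volume f k) ξ
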